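/- Let A, B ∈ D^k(H). Then 𝒫(R, A) and 𝒫(R, B) are positive invertible operators, A and B are Poisson equivalent, and (1/2)·ln( 1 + d_P(A,B) / max{ sup_{r∈[0,1)}‖𝒫(R,rA)‖, sup_{r∈[0,1)}‖𝒫(R,rB)‖ } ) ≤ δ_P(A,B) ≤ (1/2)·ln( 1 + max{ ‖𝒫(R,A)^{-1}‖, ‖𝒫(R,B)^{-1}‖ }·d_P(A,B) ). -/

import Mathlib

open ContinuousLinearMap

noncomputable section

/-- `ℓ²(ℕ^k; H)`. -/
abbrev L2 (k : ℕ) (H : Type*) [NormedAddCommGroup H] : Type _ :=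
  lp (fun _ : Fin k → ℕ => H) 2

variable {k : ℕ} {H : Type*} [NormedAddCommGroup H] [InnerProductSpace ℂ H] [CompleteSpace H]

/-- The Loewner (operator) order: `S ≤ T` iff `T - S` is a positive operator. -/
def opLE {E : Type*} [NormedAddCommGroup E] [InnerProductSpace ℂ E] [CompleteSpace E]
    (S T : E →L[ℂ] E) : Prop := (T - S).IsPositive

/-- The defect operator `Δ_X(I) = (id - Φ_{X_1}) ∘ ⋯ ∘ (id - Φ_{X_k})(I)`,
where `Φ_{X_i}(Y) = X_i Y X_i*`. -/
def defect (X : Fin k → (H →L[ℂ] H)) : H →L[ℂ] H :=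
  ((List.ofFn fun i => fun Y : H →L[ℂ] H => Y - X i * Y * adjoint (X i)).foldr (· ∘ ·) id) 1

/-- Membership in the regular polydisk `D^k(H)`: pairwise commuting operators of norm `< 1`
with positive invertible defect operator. -/
def memPolydisk (X : Fin k → (H →L[ℂ] H)) : Prop :=
  (∀ i j, Commute (X i) (X j)) ∧ (∀ i, ‖X i‖ < 1) ∧
    (defect X).IsPositive ∧ IsUnit (defect X)

/-- Membership in the closed regular polydisk `D^k(H)⁻`: pairwise commuting contractions `X`
with `rX ∈ D^k(H)` for all `r ∈ (0,1)`. -/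
def memClosedPolydisk (X : Fin k → (H →L[ℂ] H)) : Prop :=
  (∀ i j, Commute (X i) (X j)) ∧ (∀ i, ‖X i‖ ≤ 1) ∧
    ∀ r ∈ Set.Ioo (0 : ℝ) 1, memPolydisk (fun i => ((r : ℂ) • X i))

/-- `P` is the pluriharmonic Poisson kernel `𝒫(R, rX)` on `ℓ²(ℕ^k; H)`: it is characterized by
`⟨𝒫(R,rX)(δ_β h), δ_α ℓ⟩ = r^{Σ|α_i - β_i|} ⟨(∏ X_i^{(β_i-α_i)⁺})(∏ (X_i*)^{(α_i-β_i)⁺}) h, ℓ⟩`. -/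
def IsPoissonKernel (X : Fin k → (H →L[ℂ] H)) (r : ℝ)
    (P : L2 k H →L[ℂ] L2 k H) : Prop :=
  ∀ (α β : Fin k → ℕ) (h ℓ : H),
    inner (𝕜 := ℂ) (P (lp.single 2 β h)) (lp.single 2 α ℓ) =
      ((r ^ (∑ i, ((α i - β i) + (β i - α i))) : ℝ) : ℂ) *
        inner (𝕜 := ℂ)
          (((List.ofFn fun i => X i ^ (β i - α i)).prod *
            (List.ofFn fun i => (adjoint (X i)) ^ (α i - β i)).prod) h) ℓ

/-- The two-sided Harnack-type domination `c⁻² 𝒫(R,rB) ≤ 𝒫(R,rA) ≤ c² 𝒫(R,rB)` for all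
`r ∈ [0,1)`, expressed in terms of the Poisson kernel families. -/
def PoissonSandwich (PA PB : ℝ → (L2 k H →L[ℂ] L2 k H)) (c : ℝ) : Prop :=
  ∀ r ∈ Set.Ico (0 : ℝ) 1,
    opLE (((c : ℂ) ^ 2)⁻¹ • PB r) (PA r) ∧ opLE (PA r) (((c : ℂ) ^ 2) • PB r)

/-- Poisson equivalence of two points, expressed via their Poisson kernel families. -/
def PoissonEquiv (PA PB : ℝ → (L2 k H →L[ℂ] L2 k H)) : Prop :=
  ∃ c : ℝ, 1 ≤ c ∧ PoissonSandwich PA PB c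

/-- The Poisson distance `δ_P`, expressed via the Poisson kernel families. -/
def deltaP (PA PB : ℝ → (L2 k H →L[ℂ] L2 k H)) : ℝ :=
  Real.log (sInf {c : ℝ | 1 ≤ c ∧ PoissonSandwich PA PB c})

/-!
Let `R_j` be the shift in the `j`-th coordinate and `N = ∏ j, (1 - R_j* ⊗ X_j)`. Since `‖X j‖ < 1`,
`N` is invertible. Each of its factors cancels the part of the Poisson kernel with `α j < β j`, so
`N 𝒫(R, X)` is block lower triangular and the self-adjoint operator `N 𝒫(R, X) N*` is block
diagonal: it equals `1 ⊗ Δ_X(I)`. Hence `𝒫(R, X)` is positive and invertible.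

`𝒫(R, rX)` is the Schur product of `𝒫(R, X)` with the kernel `∏ i, r ^ |α i - β i|`, which is
positive semidefinite because `r ^ |m - n|` is the covariance of a stationary autoregressive
sequence. Therefore `m ≤ 𝒫(R, X) ≤ M` implies `m ≤ 𝒫(R, rX) ≤ M`. These uniform bounds turn
`P ≤ Q + ‖P - Q‖` into the sandwich inequality with `c² = 1 + m⁻¹ d_P`; conversely, a sandwich with
constant `c` gives `P - Q ≤ (c² - 1) Q ≤ (c² - 1) M`.
-/
section CStarAlgebra

variable {A : Type*} [CStarAlgebra A] [PartialOrder A] [StarOrderedRing A] {a b : A}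

lemma one_le_norm_inverse_smul (ha : IsStrictlyPositive a) : 1 ≤ ‖Ring.inverse a‖ • a :=
  calc 1 = CFC.sqrt a * Ring.inverse a * CFC.sqrt a := by
        have := CFC.conjSqrt_ringInverse_self (Ring.inverse a) ha.ringInverse
        rw [Ring.inverse_inverse ha.isUnit, CFC.conjSqrt_apply] at this
        exact this.symm
    _ ≤ ‖Ring.inverse a‖ • (CFC.sqrt a * CFC.sqrt a) := by
        simpa only [(CFC.sqrt_nonneg a).isSelfAdjoint.star_eq] using
          CStarAlgebra.star_left_conjugate_le_norm_smul (a := CFC.sqrt a)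
            (b := Ring.inverse a) (hb := ha.ringInverse.isSelfAdjoint)
    _ = ‖Ring.inverse a‖ • a := by rw [CFC.sqrt_mul_sqrt_self a ha.nonneg]

lemma le_norm_smul_one (ha : IsSelfAdjoint a) : a ≤ ‖a‖ • (1 : A) := by
  simpa only [Algebra.algebraMap_eq_smul_one] using ha.le_algebraMap_norm_self

lemma norm_le_of_le_of_neg_le {M : ℝ} (hM : 0 ≤ M) (h : a ≤ M • (1 : A))
    (h' : -a ≤ M • (1 : A)) : ‖a‖ ≤ M := by
  rw [← Algebra.algebraMap_eq_smul_one] at h h'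
  have ha : IsSelfAdjoint a := by
    simpa using (IsSelfAdjoint.algebraMap A (.all M)).sub (IsSelfAdjoint.of_nonneg (sub_nonneg.2 h))
  rcases subsingleton_or_nontrivial A with _ | _
  · rwa [Subsingleton.elim a 0, norm_zero]
  rcases CStarAlgebra.norm_or_neg_norm_mem_spectrum ha with hs | hs
  · exact (le_algebraMap_iff_spectrum_le ha).1 h _ hs
  · refine neg_le_neg_iff.1 ((algebraMap_le_iff_le_spectrum ha).1 ?_ _ hs)
    rwa [map_neg, neg_le]

-- Stated in a C*-algebra because the ordered-module instances of `inv_smul_le_iff_of_pos` are not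
-- found by instance search for operators on `lp`.
lemma inv_smul_le_iff {c : ℝ} (hc : 0 < c) : c⁻¹ • a ≤ b ↔ a ≤ c • b :=
  inv_smul_le_iff_of_pos hc

lemma one_le_smul_of_le {N N' : ℝ} (ha : 0 ≤ a) (hN : 1 ≤ N • a) (h : N ≤ N') : 1 ≤ N' • a :=
  hN.trans (smul_le_smul_of_nonneg_right h ha)

lemma le_smul_of_norm_sub_le {d N : ℝ} (ha : IsSelfAdjoint a) (hb : IsSelfAdjoint b)
    (hN : 1 ≤ N • b) (hd : ‖a - b‖ ≤ d) : a ≤ (1 + N * d) • b := by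
  have hd₀ : 0 ≤ d := (norm_nonneg _).trans hd
  calc a = (a - b) + b := by abel
    _ ≤ ‖a - b‖ • 1 + b := by gcongr; exact le_norm_smul_one (ha.sub hb)
    _ ≤ d • 1 + b := by gcongr
    _ ≤ d • (N • b) + b := by gcongr
    _ = (1 + N * d) • b := by module

lemma norm_sub_le_of_le_smul {q M : ℝ} (hq : 1 ≤ q) (ha : IsSelfAdjoint a) (hb : IsSelfAdjoint b)
    (haM : ‖a‖ ≤ M) (hbM : ‖b‖ ≤ M) (hab : a ≤ q • b) (hba : b ≤ q • a) :
    ‖a - b‖ ≤ (q - 1) * M := by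
  have sub_le {x y : A} (hy : IsSelfAdjoint y) (hyM : ‖y‖ ≤ M) (hxy : x ≤ q • y) :
      x - y ≤ ((q - 1) * M) • (1 : A) :=
    calc x - y ≤ q • y - y := by gcongr
      _ = (q - 1) • y := by module
      _ ≤ (q - 1) • (‖y‖ • 1) :=
          smul_le_smul_of_nonneg_left (le_norm_smul_one hy) (sub_nonneg.2 hq)
      _ ≤ ((q - 1) * M) • 1 := by
          rw [smul_smul]
          gcongr
  have hM : 0 ≤ M := (norm_nonneg _).trans haM
  refine norm_le_of_le_of_neg_le (mul_nonneg (sub_nonneg.2 hq) hM) (sub_le hb hbM hab) ?_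
  rw [neg_sub]
  exact sub_le ha haM hba

end CStarAlgebra

section PosSemidef

open scoped ComplexOrder

variable {𝕜 ι κ E : Type*} [RCLike 𝕜] [NormedAddCommGroup E] [InnerProductSpace 𝕜 E]

lemma posSemidef_of_inner_apply {T : E →L[𝕜] E} (hT : T.IsPositive) (v : ι → E) :
    (Matrix.of fun i j => inner 𝕜 (v i) (T (v j))).PosSemidef := by
  refine ⟨Matrix.IsHermitian.ext fun i j => ?_, fun x => ?_⟩
  · simp only [Matrix.of_apply, RCLike.star_def, inner_conj_symm]
    exact hT.isSymmetric (v i) (v j)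
  · refine (hT.inner_nonneg_right (x.sum fun i c => c • v i)).trans_eq ?_
    simp only [Finsupp.sum, map_sum, map_smul, sum_inner, inner_sum, inner_smul_left,
      inner_smul_right, Matrix.of_apply, RCLike.star_def, Finset.mul_sum]
    rw [Finset.sum_comm]
    exact Finset.sum_congr rfl fun i _ => Finset.sum_congr rfl fun j _ => by ring

lemma posSemidef_gram (v : ι → E) : (Matrix.gram 𝕜 v).PosSemidef :=
  posSemidef_of_inner_apply ContinuousLinearMap.isPositive_one v

lemma sum_sum_nonneg_of_posSemidef {M : Matrix ι ι 𝕜} (hM : M.PosSemidef) (s : Finset ι) :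
    0 ≤ ∑ i ∈ s, ∑ j ∈ s, M i j := by
  classical
  have h := (hM.submatrix ((↑) : s → ι)).dotProduct_mulVec_nonneg 1
  simp only [dotProduct, Matrix.mulVec, star_one, Pi.one_apply, one_mul, mul_one,
    Matrix.submatrix_apply] at h
  simpa only [← Finset.sum_coe_sort s] using h

lemma posSemidef_prod {M : κ → Matrix ι ι 𝕜} (hM : ∀ l, (M l).PosSemidef) (s : Finset κ) :
    (Matrix.of fun i j => ∏ l ∈ s, M l i j).PosSemidef := by
  classical
  induction s using Finset.induction_on with
  | empty => simpa [Matrix.gram] using posSemidef_gram (𝕜 := 𝕜) fun _ : ι => (1 : 𝕜)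
  | insert l s hl ih => simpa [Finset.prod_insert hl, Matrix.hadamard] using (hM l).hadamard ih

variable (𝕜) in
/-- The stationary autoregressive sequence `vₙ₊₁ = r vₙ + √(1 - r²) eₙ₊₁`, started at `v₀ = e₀`. -/
def autoregressive (r : ℝ) (e : ℕ → E) : ℕ → E
  | 0 => e 0
  | n + 1 => (r : 𝕜) • autoregressive r e n + (√(1 - r ^ 2) : 𝕜) • e (n + 1)

variable {e : ℕ → E} {r : ℝ}

lemma inner_autoregressive_eq_zero (he : Orthonormal 𝕜 e) {m n : ℕ} (h : n < m) :
    inner 𝕜 (autoregressive 𝕜 r e n) (e m) = 0 := by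
  induction n with
  | zero => exact he.inner_eq_zero h.ne
  | succ n ih =>
    simp only [autoregressive, inner_add_left, inner_smul_left, ih (Nat.lt_of_succ_lt h),
      he.inner_eq_zero h.ne, mul_zero, add_zero]

lemma inner_autoregressive_self (he : Orthonormal 𝕜 e) (hr₀ : 0 ≤ r) (hr₁ : r ≤ 1) (n : ℕ) :
    inner 𝕜 (autoregressive 𝕜 r e n) (autoregressive 𝕜 r e n) = 1 := by
  induction n with
  | zero => simp [autoregressive, he.1 0]
  | succ n ih =>
    have h := inner_autoregressive_eq_zero (r := r) he n.lt_succ_self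
    have h' : inner 𝕜 (e (n + 1)) (autoregressive 𝕜 r e n) = 0 :=
      inner_eq_zero_symm.1 h
    have hsq : (√(1 - r ^ 2) : 𝕜) * √(1 - r ^ 2) = 1 - r ^ 2 := by
      exact_mod_cast Real.mul_self_sqrt (sub_nonneg.2 (pow_le_one₀ hr₀ hr₁))
    simp only [autoregressive, inner_add_left, inner_add_right, inner_smul_left, inner_smul_right,
      RCLike.conj_ofReal, ih, h, h', orthonormal_iff_ite.1 he (n + 1) (n + 1), if_true]
    linear_combination hsq

lemma inner_autoregressive_add (he : Orthonormal 𝕜 e) (hr₀ : 0 ≤ r) (hr₁ : r ≤ 1) (m d : ℕ) :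
    inner 𝕜 (autoregressive 𝕜 r e m) (autoregressive 𝕜 r e (m + d)) = (r : 𝕜) ^ d := by
  induction d with
  | zero => exact (inner_autoregressive_self he hr₀ hr₁ m).trans (pow_zero _).symm
  | succ d ih =>
    rw [← add_assoc, autoregressive, inner_add_right, inner_smul_right, inner_smul_right, ih,
      inner_autoregressive_eq_zero he (by omega), mul_zero, add_zero, pow_succ']

lemma gram_autoregressive (he : Orthonormal 𝕜 e) (hr₀ : 0 ≤ r) (hr₁ : r ≤ 1) :
    Matrix.gram 𝕜 (autoregressive 𝕜 r e) = Matrix.of fun m n => (r : 𝕜) ^ ((m - n) + (n - m)) := by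
  ext m n
  rw [Matrix.gram_apply, Matrix.of_apply]
  rcases le_total m n with h | h <;> obtain ⟨d, rfl⟩ := Nat.exists_eq_add_of_le h
  · simp [inner_autoregressive_add he hr₀ hr₁]
  · rw [← inner_conj_symm, inner_autoregressive_add he hr₀ hr₁]
    simp

lemma posSemidef_pow_dist {σ : Type*} [Fintype σ] (hr₀ : 0 ≤ r) (hr₁ : r ≤ 1) :
    (Matrix.of fun α β : σ → ℕ => (r : 𝕜) ^ ∑ i, ((α i - β i) + (β i - α i))).PosSemidef := by
  have he := (default : HilbertBasis ℕ 𝕜 (lp (fun _ : ℕ => 𝕜) 2)).orthonormal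
  have h := posSemidef_gram (𝕜 := 𝕜) (autoregressive 𝕜 r
    (default : HilbertBasis ℕ 𝕜 (lp (fun _ : ℕ => 𝕜) 2)))
  rw [gram_autoregressive he hr₀ hr₁] at h
  simpa [Finset.prod_pow_eq_pow_sum] using
    posSemidef_prod (fun i => h.submatrix fun α : σ → ℕ => α i) Finset.univ

end PosSemidef

local notation "ℓ²(" ι "," E ")" => lp (fun _ : ι => E) 2

section BlockEntry

variable {𝕜 ι E : Type*} [RCLike 𝕜] [DecidableEq ι] [NormedAddCommGroup E] [InnerProductSpace 𝕜 E]
  {Q Q' : ℓ²(ι,E) →L[𝕜] ℓ²(ι,E)}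

/-- The `(α, β)` entry of an operator on `ℓ²(ι; E)`, viewed as an `ι × ι` block operator matrix. -/
def blockEntry (Q : ℓ²(ι,E) →L[𝕜] ℓ²(ι,E)) (α β : ι) : E →L[𝕜] E :=
  lp.evalCLM 𝕜 _ 2 α ∘L Q ∘L lp.singleContinuousLinearMap 𝕜 (fun _ : ι => E) 2 β

lemma blockEntry_apply (Q : ℓ²(ι,E) →L[𝕜] ℓ²(ι,E)) (α β : ι) (x : E) :
    blockEntry Q α β x = Q (lp.single 2 β x) α :=
  rfl

lemma inner_blockEntry (Q : ℓ²(ι,E) →L[𝕜] ℓ²(ι,E)) (α β : ι) (x y : E) :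
    inner 𝕜 x (blockEntry Q α β y) = inner 𝕜 (lp.single 2 α x) (Q (lp.single 2 β y)) := by
  rw [lp.inner_single_left, blockEntry_apply]

lemma blockEntry_one (α β : ι) :
    blockEntry (1 : ℓ²(ι,E) →L[𝕜] ℓ²(ι,E)) α β = if α = β then 1 else 0 := by
  ext x
  rcases eq_or_ne α β with rfl | h
  · simp [blockEntry_apply]
  · simp [blockEntry_apply, h]

lemma blockEntry_add (α β : ι) : blockEntry (Q + Q') α β = blockEntry Q α β + blockEntry Q' α β :=
  rfl

lemma blockEntry_sub (α β : ι) : blockEntry (Q - Q') α β = blockEntry Q α β - blockEntry Q' α β :=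
  rfl

lemma ext_blockEntry (h : ∀ α β, blockEntry Q α β = blockEntry Q' α β) : Q = Q' :=
  lp.ext_continuousLinearMap ENNReal.ofNat_ne_top fun β =>
    ContinuousLinearMap.ext fun x => lp.ext <| funext fun α => DFunLike.congr_fun (h α β) x

/-- The singletons `E → ℓ²(ι; E)` as isometries. -/
def singleIsometry (𝕜 E : Type*) {ι : Type*} [RCLike 𝕜] [DecidableEq ι] [NormedAddCommGroup E]
    [InnerProductSpace 𝕜 E] (α : ι) : E →ₗᵢ[𝕜] ℓ²(ι,E) where
  toLinearMap := lp.lsingle (E := fun _ : ι => E) 2 α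
  norm_map' := lp.norm_single (E := fun _ : ι => E) two_pos α

lemma orthogonalFamily_singleIsometry :
    OrthogonalFamily 𝕜 (fun _ : ι => E) (singleIsometry 𝕜 E) := fun α β h x y => by
  change inner 𝕜 (lp.single (E := fun _ : ι => E) 2 α x) (lp.single 2 β y) = 0
  rw [lp.inner_single_left, lp.single_apply_ne _ _ _ h, inner_zero_right]

variable [CompleteSpace E]

lemma blockEntry_star (α β : ι) : blockEntry (star Q) α β = star (blockEntry Q β α) := by
  ext x
  refine ext_inner_left 𝕜 fun y => ?_
  simp only [ContinuousLinearMap.star_eq_adjoint, inner_blockEntry, adjoint_inner_right]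
  rw [← inner_conj_symm, ← inner_blockEntry, inner_conj_symm]

/-- The weighted shift `δ_β x ↦ δ_{σ β} (T x)` on `ℓ²(ι; E)`. -/
def weightedShift (σ : ι ↪ ι) (T : E →L[𝕜] E) : ℓ²(ι,E) →L[𝕜] ℓ²(ι,E) :=
  (orthogonalFamily_singleIsometry.comp σ.injective).linearIsometry.toContinuousLinearMap ∘L
    lp.mapCLM (E := fun _ : ι => E) 2 (fun _ => T) (norm_nonneg T) fun _ => le_rfl

variable {σ : ι ↪ ι} {T : E →L[𝕜] E}

lemma weightedShift_single (β : ι) (x : E) :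
    weightedShift σ T (lp.single 2 β x) = lp.single 2 (σ β) (T x) := by
  have h : lp.mapCLM (𝕜 := 𝕜) 2 (fun _ : ι => T) (norm_nonneg T) (fun _ => le_rfl)
      (lp.single 2 β x) = lp.single 2 β (T x) := by
    ext α
    simp [Pi.single_apply, apply_ite T]
  simp only [weightedShift, ContinuousLinearMap.comp_apply, h]
  exact (orthogonalFamily_singleIsometry.comp σ.injective).linearIsometry_apply_single (T x)

lemma norm_weightedShift_le : ‖weightedShift σ T‖ ≤ ‖T‖ := by
  rw [weightedShift, LinearIsometry.norm_toContinuousLinearMap_comp]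
  exact lp.norm_mapCLM_le ..

lemma blockEntry_mul_weightedShift (α β : ι) :
    blockEntry (Q * weightedShift σ T) α β = blockEntry Q α (σ β) * T := by
  ext x
  simp [blockEntry_apply, weightedShift_single]

lemma blockEntry_star_weightedShift_mul (α β : ι) :
    blockEntry (star (weightedShift σ T) * Q) α β = star T * blockEntry Q (σ α) β := by
  rw [← star_star (_ * Q), blockEntry_star, star_mul, star_star, blockEntry_mul_weightedShift,
    star_mul, blockEntry_star, star_star]

end BlockEntry

section BlockPositivity

open scoped ComplexOrder

variable {ι E : Type*} [DecidableEq ι] [NormedAddCommGroup E] [InnerProductSpace ℂ E]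
  {Q Q' : ℓ²(ι,E) →L[ℂ] ℓ²(ι,E)}

lemma blockEntry_real_smul (c : ℝ) (α β : ι) : blockEntry (c • Q) α β = c • blockEntry Q α β :=
  rfl

lemma nonneg_iff_posSemidef_blockEntry :
    0 ≤ Q ↔ ∀ x : ι → E,
      (Matrix.of fun α β => inner ℂ (x α) (blockEntry Q α β (x β))).PosSemidef := by
  rw [ContinuousLinearMap.nonneg_iff_isPositive]
  refine ⟨fun hQ x => ?_, fun hQ => ?_⟩
  · simpa only [inner_blockEntry] using posSemidef_of_inner_apply hQ fun α => lp.single 2 α (x α)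
  have hnonneg (f : ℓ²(ι,E)) : 0 ≤ inner ℂ f (Q f) := by
    have hcont : Continuous fun g : ℓ²(ι,E) => inner ℂ g (Q g) := by fun_prop
    refine isClosed_Ici.mem_of_tendsto
      ((hcont.tendsto f).comp (lp.hasSum_single ENNReal.ofNat_ne_top f)) (.of_forall fun s => ?_)
    have hs := sum_sum_nonneg_of_posSemidef (hQ f) s
    simp only [Matrix.of_apply, inner_blockEntry] at hs
    rw [Finset.sum_comm] at hs
    simpa only [Set.mem_Ici, Function.comp_apply, map_sum, sum_inner, inner_sum] using hs
  refine (isPositive_iff_complex Q).2 fun f => ?_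
  have hf : 0 ≤ inner ℂ (Q f) f := by simpa using star_nonneg_iff.2 (hnonneg f)
  exact ⟨(Complex.eq_re_of_ofReal_le hf).symm, (RCLike.nonneg_iff.1 hf).1⟩

lemma nonneg_of_blockEntry_eq_smul {φ : Matrix ι ι ℂ} (hφ : φ.PosSemidef)
    (hQQ' : ∀ α β, blockEntry Q' α β = φ α β • blockEntry Q α β) (hQ : 0 ≤ Q) : 0 ≤ Q' := by
  rw [nonneg_iff_posSemidef_blockEntry] at hQ ⊢
  intro x
  simpa [Matrix.hadamard, hQQ', inner_smul_right] using hφ.hadamard (hQ x)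

lemma nonneg_of_blockEntry_eq_ite {D : ι → E →L[ℂ] E} (hD : ∀ α, 0 ≤ D α)
    (hQ : ∀ α β, blockEntry Q α β = if α = β then D α else 0) : 0 ≤ Q := by
  rw [nonneg_iff_posSemidef_blockEntry]
  intro x
  convert Matrix.PosSemidef.diagonal (d := fun α => inner ℂ (x α) (D α (x α)))
    fun α => ((nonneg_iff_isPositive _).1 (hD α)).inner_nonneg_right (x α) using 1
  ext α β
  rcases eq_or_ne α β with rfl | h
  · simp [hQ]
  · simp [hQ, h]

variable [CompleteSpace E]

lemma isStrictlyPositive_of_blockEntry_eq_ite {D : E →L[ℂ] E} (hD : IsStrictlyPositive D)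
    (hQ : ∀ α β, blockEntry Q α β = if α = β then D else 0) : IsStrictlyPositive Q := by
  set N := ‖Ring.inverse D‖
  have hND : 0 ≤ N • D - 1 := sub_nonneg.2 (one_le_norm_inverse_smul hD)
  have hNQ : 1 ≤ N • Q := by
    refine sub_nonneg.1 (nonneg_of_blockEntry_eq_ite (fun _ => hND) fun α β => ?_)
    rw [blockEntry_sub, blockEntry_real_smul, blockEntry_one, hQ]
    split_ifs <;> simp
  have hunit : IsUnit (algebraMap ℝ _ N * Q) := by
    rw [← Algebra.smul_def]
    exact CStarAlgebra.isUnit_of_le 1 hNQ isStrictlyPositive_one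
  exact ⟨nonneg_of_blockEntry_eq_ite (fun _ => hD.nonneg) hQ,
    ((Algebra.commute_algebraMap_left N Q).isUnit_mul_iff.1 hunit).2⟩

/-- Lower triangularity with respect to a possibly partial order on the index set. -/
def IsBlockLowerTriangular [LE ι] (Q : ℓ²(ι,E) →L[ℂ] ℓ²(ι,E)) : Prop :=
  ∀ α β, ¬ β ≤ α → blockEntry Q α β = 0

lemma IsBlockLowerTriangular.blockEntry_eq_zero [PartialOrder ι] (hQ : IsBlockLowerTriangular Q)
    (hsa : IsSelfAdjoint Q) {α β : ι} (h : α ≠ β) : blockEntry Q α β = 0 := by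
  by_cases hβα : β ≤ α
  · rw [← hsa.star_eq, blockEntry_star, hQ β α fun hαβ => h (le_antisymm hαβ hβα), star_zero]
  · exact hQ α β hβα

end BlockPositivity

section MultiPow

variable {M : Type*} [Monoid M] {x : Fin k → M}

/-- The multi-index power `x ^ γ = ∏ i, x i ^ γ i` of a tuple in a possibly noncommutative monoid,
with the factors in increasing order of `i`. -/
def multiPow (x : Fin k → M) (γ : Fin k → ℕ) : M :=
  (List.ofFn fun i => x i ^ γ i).prod

@[simp]
lemma multiPow_zero (x : Fin k → M) : multiPow x 0 = 1 := by
  simp [multiPow]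

lemma multiPow_succ {k : ℕ} (x : Fin (k + 1) → M) (γ : Fin (k + 1) → ℕ) :
    multiPow x γ = x 0 ^ γ 0 * multiPow (Fin.tail x) (Fin.tail γ) := by
  simp only [multiPow, List.ofFn_succ, List.prod_cons, Fin.tail]

lemma commute_multiPow {y : M} (h : ∀ i, Commute y (x i)) (γ : Fin k → ℕ) :
    Commute y (multiPow x γ) := by
  refine Commute.list_prod_right _ _ fun z hz => ?_
  obtain ⟨i, rfl⟩ := List.mem_ofFn.1 hz
  exact (h i).pow_right _

lemma multiPow_add_single (hx : ∀ i j, Commute (x i) (x j)) (γ : Fin k → ℕ) (j : Fin k) :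
    multiPow x (γ + Pi.single j 1) = x j * multiPow x γ := by
  induction k with
  | zero => exact j.elim0
  | succ k ih =>
    rw [multiPow_succ, multiPow_succ]
    cases j using Fin.cases with
    | zero =>
      have htail : Fin.tail (γ + Pi.single 0 1) = Fin.tail γ := by
        ext i
        simp [Fin.tail]
      rw [htail, ← mul_assoc, Pi.add_apply, Pi.single_eq_same, pow_succ']
    | succ j =>
      have htail : Fin.tail (γ + Pi.single j.succ 1) = Fin.tail γ + Pi.single j 1 := by
        ext i
        simp [Fin.tail, Pi.single_apply]
      have hhead : (γ + Pi.single j.succ 1 : Fin (k + 1) → ℕ) 0 = γ 0 := by simp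
      rw [htail, hhead, ih (x := Fin.tail x) fun i j => hx i.succ j.succ, ← mul_assoc,
        ← mul_assoc]
      exact congrArg (· * _) ((hx 0 j.succ).pow_left (γ 0)).eq

lemma star_multiPow [StarMul M] (hx : ∀ i j, Commute (x i) (x j)) (γ : Fin k → ℕ) :
    star (multiPow x γ) = multiPow (star x) γ := by
  induction k with
  | zero => simp [multiPow]
  | succ k ih =>
    have hcomm : Commute (x 0 ^ γ 0) (multiPow (Fin.tail x) (Fin.tail γ)) :=
      (commute_multiPow (fun i => hx 0 i.succ) _).pow_left _
    rw [multiPow_succ, multiPow_succ, hcomm.eq, star_mul, star_pow,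
      ih (x := Fin.tail x) fun i j => hx i.succ j.succ]
    rfl

end MultiPow

section PluriharmonicKernel

variable {M : Type*} [Monoid M] [StarMul M] {x : Fin k → M} {α β : Fin k → ℕ} {j : Fin k}

/-- The kernel `(α, β) ↦ x ^ (β - α)⁺ * d * (x*) ^ (α - β)⁺` on `ℕ^k`. -/
def pluriharmonicKernel (x : Fin k → M) (d : M) (α β : Fin k → ℕ) : M :=
  multiPow x (β - α) * d * multiPow (star x) (α - β)

lemma pluriharmonicKernel_self (x : Fin k → M) (d : M) (α : Fin k → ℕ) :
    pluriharmonicKernel x d α α = d := by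
  simp [pluriharmonicKernel]

lemma pluriharmonicKernel_sub {R : Type*} [Ring R] [StarMul R] (x : Fin k → R) (d d' : R)
    (α β : Fin k → ℕ) :
    pluriharmonicKernel x (d - d') α β =
      pluriharmonicKernel x d α β - pluriharmonicKernel x d' α β := by
  simp only [pluriharmonicKernel, mul_sub, sub_mul]

lemma star_pluriharmonicKernel (hx : ∀ i j, Commute (x i) (x j)) (d : M) (α β : Fin k → ℕ) :
    star (pluriharmonicKernel x d α β) = pluriharmonicKernel x (star d) β α := by
  have hx' (i j) : Commute (star x i) (star x j) := (hx i j).star_star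
  simp only [pluriharmonicKernel, star_mul, star_multiPow hx, star_multiPow hx', star_star,
    mul_assoc]

lemma mul_pluriharmonicKernel_add_single_of_lt (hx : ∀ i j, Commute (x i) (x j)) (d : M)
    (h : α j < β j) :
    x j * pluriharmonicKernel x d (α + Pi.single j 1) β = pluriharmonicKernel x d α β := by
  have hβα : β - α = β - (α + Pi.single j 1) + Pi.single j 1 := by
    ext i
    simp only [Pi.sub_apply, Pi.add_apply, Pi.single_apply]
    grind
  have hαβ : α + Pi.single j 1 - β = α - β := by
    ext i
    simp only [Pi.sub_apply, Pi.add_apply, Pi.single_apply]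
    grind
  simp only [pluriharmonicKernel, hβα, hαβ, multiPow_add_single hx, mul_assoc]

lemma mul_pluriharmonicKernel_add_single_of_le (hx : ∀ i j, Commute (x i) (x j)) (d : M)
    (h : β j ≤ α j) :
    x j * pluriharmonicKernel x d (α + Pi.single j 1) β =
      pluriharmonicKernel x (x j * d * star (x j)) α β := by
  have hβα : β - (α + Pi.single j 1) = β - α := by
    ext i
    simp only [Pi.sub_apply, Pi.add_apply, Pi.single_apply]
    grind
  have hαβ : α + Pi.single j 1 - β = α - β + Pi.single j 1 := by
    ext i
    simp only [Pi.sub_apply, Pi.add_apply, Pi.single_apply]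
    grind
  have hx' (i j) : Commute (star x i) (star x j) := (hx i j).star_star
  simp only [pluriharmonicKernel, hβα, hαβ, multiPow_add_single hx', Pi.star_apply, ← mul_assoc,
    (commute_multiPow (hx j) (β - α)).eq]

end PluriharmonicKernel

section Factorization

variable {X : Fin k → (H →L[ℂ] H)} {P Q : L2 k H →L[ℂ] L2 k H}

/-- The operator `1 - R_j* ⊗ X_j` on `ℓ²(ℕ^k; H)`, where `R_j` is the shift in the `j`-th
coordinate. -/
def shiftFactor (X : Fin k → (H →L[ℂ] H)) (j : Fin k) : L2 k H →L[ℂ] L2 k H :=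
  1 - star (weightedShift (addRightEmbedding (Pi.single j 1)) (star (X j)))

lemma isUnit_shiftFactor {j : Fin k} (hX : ‖X j‖ < 1) : IsUnit (shiftFactor X j) := by
  let σ : (Fin k → ℕ) ↪ (Fin k → ℕ) := addRightEmbedding (Pi.single j 1)
  have h : IsUnit (1 - weightedShift σ (star (X j))) :=
    isUnit_one_sub_of_norm_lt_one (norm_weightedShift_le.trans_lt ((norm_star _).trans_lt hX))
  simpa only [shiftFactor, star_sub, star_one] using h.star

lemma blockEntry_shiftFactor_mul (j : Fin k) (α β : Fin k → ℕ) :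
    blockEntry (shiftFactor X j * Q) α β =
      blockEntry Q α β - X j * blockEntry Q (α + Pi.single j 1) β := by
  rw [shiftFactor, sub_mul, one_mul, blockEntry_sub, blockEntry_star_weightedShift_mul, star_star,
    addRightEmbedding_apply]

lemma blockEntry_mul_star_shiftFactor (j : Fin k) (α β : Fin k → ℕ) :
    blockEntry (Q * star (shiftFactor X j)) α β =
      blockEntry Q α β - blockEntry Q α (β + Pi.single j 1) * star (X j) := by
  rw [shiftFactor, star_sub, star_one, star_star, mul_sub, mul_one, blockEntry_sub,
    blockEntry_mul_weightedShift, addRightEmbedding_apply]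

/-- The product of the factors `1 - R_j* ⊗ X_j` for `j` in the list `L`. -/
def shiftProduct (X : Fin k → (H →L[ℂ] H)) (L : List (Fin k)) : L2 k H →L[ℂ] L2 k H :=
  (L.map (shiftFactor X)).prod

lemma isUnit_shiftProduct (hX : ∀ j, ‖X j‖ < 1) (L : List (Fin k)) :
    IsUnit (shiftProduct X L) :=
  List.prod_isUnit <| List.forall_mem_map.2 fun j _ => isUnit_shiftFactor (hX j)

/-- The defect operator of the subtuple of `X` indexed by the list `L`. -/
def partialDefect (X : Fin k → (H →L[ℂ] H)) (L : List (Fin k)) : H →L[ℂ] H :=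
  L.foldr (fun j D => D - X j * D * star (X j)) 1

lemma partialDefect_cons (X : Fin k → (H →L[ℂ] H)) (j : Fin k) (L : List (Fin k)) :
    partialDefect X (j :: L) = partialDefect X L - X j * partialDefect X L * star (X j) :=
  rfl

lemma partialDefect_finRange (X : Fin k → (H →L[ℂ] H)) :
    partialDefect X (List.finRange k) = defect X := by
  rw [defect, List.ofFn_eq_map]
  induction List.finRange k with
  | nil => rfl
  | cons j L ih => rw [partialDefect_cons, ih]; rfl

lemma blockEntry_shiftProduct_mul (hX : ∀ i j, Commute (X i) (X j))
    (hP : ∀ α β, blockEntry P α β = pluriharmonicKernel X 1 α β) {L : List (Fin k)} (hL : L.Nodup)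
    (α β : Fin k → ℕ) :
    blockEntry (shiftProduct X L * P) α β =
      if ∀ i ∈ L, β i ≤ α i then pluriharmonicKernel X (partialDefect X L) α β else 0 := by
  induction L generalizing α with
  | nil => simp [shiftProduct, partialDefect, hP]
  | cons j L ih =>
    obtain ⟨hj, hL⟩ := List.nodup_cons.1 hL
    have hshift : (∀ i ∈ L, β i ≤ (α + Pi.single j 1 : Fin k → ℕ) i) ↔ ∀ i ∈ L, β i ≤ α i := by
      refine forall₂_congr fun i hi => ?_
      rw [Pi.add_apply, Pi.single_eq_of_ne (ne_of_mem_of_not_mem hi hj), add_zero]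
    rw [shiftProduct, List.map_cons, List.prod_cons, mul_assoc, ← shiftProduct,
      blockEntry_shiftFactor_mul, ih hL, ih hL, if_congr hshift rfl rfl,
      if_congr List.forall_mem_cons rfl rfl]
    by_cases hαβ : ∀ i ∈ L, β i ≤ α i
    · rw [if_pos hαβ, if_pos hαβ]
      rcases lt_or_ge (α j) (β j) with h | h
      · rw [mul_pluriharmonicKernel_add_single_of_lt hX _ h, sub_self,
          if_neg fun h' => h.not_ge h'.1]
      · rw [mul_pluriharmonicKernel_add_single_of_le hX _ h, ← pluriharmonicKernel_sub,
          ← partialDefect_cons, if_pos ⟨h, hαβ⟩]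
    · rw [if_neg hαβ, if_neg hαβ, if_neg fun h => hαβ h.2, mul_zero, sub_zero]

lemma IsBlockLowerTriangular.mul_star_shiftProduct (hQ : IsBlockLowerTriangular Q)
    (L : List (Fin k)) : IsBlockLowerTriangular (Q * star (shiftProduct X L)) ∧
      ∀ α, blockEntry (Q * star (shiftProduct X L)) α α = blockEntry Q α α := by
  induction L with
  | nil => simpa [shiftProduct] using hQ
  | cons j L ih =>
    obtain ⟨hlower, hdiag⟩ := ih
    have hcons : Q * star (shiftProduct X (j :: L)) =
        Q * star (shiftProduct X L) * star (shiftFactor X j) := by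
      rw [shiftProduct, List.map_cons, List.prod_cons, star_mul, ← mul_assoc, ← shiftProduct]
    rw [hcons]
    refine ⟨fun α β h => ?_, fun α => ?_⟩
    · rw [blockEntry_mul_star_shiftFactor, hlower α β h,
        hlower α _ fun h' => h (le_self_add.trans h'), zero_mul, sub_zero]
    · have hα : ¬ α + Pi.single j 1 ≤ α := fun h => by simpa using h j
      rw [blockEntry_mul_star_shiftFactor, hlower α _ hα, zero_mul, sub_zero, hdiag]

lemma blockEntry_shiftProduct_mul_mul_star (hX : ∀ i j, Commute (X i) (X j))
    (hP : ∀ α β, blockEntry P α β = pluriharmonicKernel X 1 α β) (α β : Fin k → ℕ) :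
    blockEntry (shiftProduct X (List.finRange k) * P * star (shiftProduct X (List.finRange k)))
      α β = if α = β then defect X else 0 := by
  have hNP (α β) : blockEntry (shiftProduct X (List.finRange k) * P) α β =
      if ∀ i, β i ≤ α i then pluriharmonicKernel X (defect X) α β else 0 := by
    rw [blockEntry_shiftProduct_mul hX hP (List.nodup_finRange k), partialDefect_finRange]
    simp only [List.mem_finRange, forall_const]
  have hlower : IsBlockLowerTriangular (shiftProduct X (List.finRange k) * P) :=
    fun α β h => (hNP α β).trans (if_neg h)
  obtain ⟨hlower', hdiag⟩ := hlower.mul_star_shiftProduct (X := X) (List.finRange k)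
  have hsa : IsSelfAdjoint P := ext_blockEntry fun α β => by
    rw [blockEntry_star, hP, hP, star_pluriharmonicKernel hX, star_one]
  rcases eq_or_ne α β with rfl | h
  · rw [hdiag, hNP, if_pos fun _ => le_rfl, if_pos rfl, pluriharmonicKernel_self]
  · rw [if_neg h, hlower'.blockEntry_eq_zero (hsa.conjugate _) h]

lemma isStrictlyPositive_of_blockEntry_eq_pluriharmonicKernel (hX : memPolydisk X)
    (hP : ∀ α β, blockEntry P α β = pluriharmonicKernel X 1 α β) : IsStrictlyPositive P := by
  obtain ⟨hcomm, hnorm, hpos, hunit⟩ := hX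
  rw [← (isUnit_shiftProduct hnorm (List.finRange k)).isStrictlyPositive_star_right_conjugate_iff]
  exact isStrictlyPositive_of_blockEntry_eq_ite ⟨(nonneg_iff_isPositive _).2 hpos, hunit⟩
    (blockEntry_shiftProduct_mul_mul_star hcomm hP)

end Factorization

section PoissonKernel

variable {X : Fin k → (H →L[ℂ] H)} {P P₁ : L2 k H →L[ℂ] L2 k H} {r : ℝ}

lemma IsPoissonKernel.blockEntry_eq (hP : IsPoissonKernel X r P) (α β : Fin k → ℕ) :
    blockEntry P α β =
      r ^ (∑ i, ((α i - β i) + (β i - α i))) • pluriharmonicKernel X 1 α β := by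
  ext h
  refine ext_inner_right ℂ fun ℓ => ?_
  rw [blockEntry_apply, ← lp.inner_single_right, hP, pluriharmonicKernel, mul_one,
    ← Complex.coe_smul, _root_.smul_apply, inner_smul_left, Complex.conj_ofReal]
  rfl

lemma IsPoissonKernel.isStrictlyPositive (hX : memPolydisk X) (hP : IsPoissonKernel X 1 P) :
    IsStrictlyPositive P :=
  isStrictlyPositive_of_blockEntry_eq_pluriharmonicKernel hX fun α β => by
    rw [hP.blockEntry_eq, one_pow, one_smul]

/-- `𝒫(R, rX)` is the Schur product of `𝒫(R, X)` with the kernel `r ^ ∑ |αᵢ - βᵢ|`, whose diagonal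
entries are `1`. -/
lemma IsPoissonKernel.smul_add_smul_one_nonneg (hr₀ : 0 ≤ r) (hr₁ : r ≤ 1)
    (hP₁ : IsPoissonKernel X 1 P₁) (hP : IsPoissonKernel X r P) {a b : ℝ}
    (h : 0 ≤ a • P₁ + b • 1) : 0 ≤ a • P + b • 1 := by
  refine nonneg_of_blockEntry_eq_smul (posSemidef_pow_dist hr₀ hr₁) (fun α β => ?_) h
  simp only [blockEntry_add, blockEntry_real_smul, blockEntry_one, hP₁.blockEntry_eq,
    hP.blockEntry_eq, one_pow, one_smul]
  rw [Matrix.of_apply, ← RCLike.ofReal_pow, ← RCLike.real_smul_eq_coe_smul (K := ℂ)]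
  rcases eq_or_ne α β with rfl | hαβ
  · simp
  · simp [hαβ, smul_comm a]

lemma IsPoissonKernel.nonneg_of_one (hr₀ : 0 ≤ r) (hr₁ : r ≤ 1)
    (hP₁ : IsPoissonKernel X 1 P₁) (hP : IsPoissonKernel X r P) (h : 0 ≤ P₁) : 0 ≤ P := by
  simpa using hP₁.smul_add_smul_one_nonneg (a := 1) (b := 0) hr₀ hr₁ hP (by simpa using h)

lemma IsPoissonKernel.norm_le_of_one (hr₀ : 0 ≤ r) (hr₁ : r ≤ 1)
    (hP₁ : IsPoissonKernel X 1 P₁) (hP : IsPoissonKernel X r P) (h : 0 ≤ P₁) : ‖P‖ ≤ ‖P₁‖ := by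
  have hle : P₁ ≤ ‖P₁‖ • 1 := le_norm_smul_one (.of_nonneg h)
  have key := hP₁.smul_add_smul_one_nonneg (a := -1) (b := ‖P₁‖) hr₀ hr₁ hP <| by
    simpa only [neg_smul, one_smul, neg_add_eq_sub, sub_nonneg] using hle
  rw [neg_smul, one_smul, neg_add_eq_sub, sub_nonneg] at key
  exact norm_le_of_le_of_neg_le (norm_nonneg _) key <|
    (neg_nonpos.2 (hP₁.nonneg_of_one hr₀ hr₁ hP h)).trans (h.trans hle)

lemma IsPoissonKernel.one_le_norm_inverse_smul (hr₀ : 0 ≤ r) (hr₁ : r ≤ 1)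
    (hP₁ : IsPoissonKernel X 1 P₁) (hP : IsPoissonKernel X r P) (h : IsStrictlyPositive P₁) :
    1 ≤ ‖Ring.inverse P₁‖ • P := by
  have hle : 1 ≤ ‖Ring.inverse P₁‖ • P₁ := _root_.one_le_norm_inverse_smul h
  have key := hP₁.smul_add_smul_one_nonneg (a := ‖Ring.inverse P₁‖) (b := -1) hr₀ hr₁ hP <| by
    simpa only [neg_smul, one_smul, ← sub_eq_add_neg, sub_nonneg] using hle
  simpa only [neg_smul, one_smul, ← sub_eq_add_neg, sub_nonneg] using key

end PoissonKernel

section RadialSup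

variable {E : Type*} [SeminormedAddCommGroup E] {f : ℝ → E} {C : ℝ}

/-- The supremum of `‖f r‖` over `r ∈ [0, 1)`; its value is `0` if these norms are unbounded. -/
def radialSup (f : ℝ → E) : ℝ :=
  sSup {y : ℝ | ∃ r ∈ Set.Ico (0 : ℝ) 1, y = ‖f r‖}

lemma norm_le_radialSup (hf : ∀ r ∈ Set.Ico (0 : ℝ) 1, ‖f r‖ ≤ C) {r : ℝ}
    (hr : r ∈ Set.Ico (0 : ℝ) 1) : ‖f r‖ ≤ radialSup f :=
  le_csSup ⟨C, by rintro _ ⟨t, ht, rfl⟩; exact hf t ht⟩ ⟨r, hr, rfl⟩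

lemma radialSup_le (hf : ∀ r ∈ Set.Ico (0 : ℝ) 1, ‖f r‖ ≤ C) : radialSup f ≤ C :=
  csSup_le ⟨_, 0, Set.left_mem_Ico.2 one_pos, rfl⟩ <| by rintro _ ⟨r, hr, rfl⟩; exact hf r hr

lemma radialSup_nonneg (f : ℝ → E) : 0 ≤ radialSup f :=
  Real.sSup_nonneg <| by rintro _ ⟨r, -, rfl⟩; exact norm_nonneg _

end RadialSup

section PoissonDistance

variable {PA PB : ℝ → (L2 k H →L[ℂ] L2 k H)} {c q : ℝ}

lemma poissonSandwich_iff (hc : 0 < c) :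
    PoissonSandwich PA PB c ↔
      ∀ r ∈ Set.Ico (0 : ℝ) 1, PB r ≤ c ^ 2 • PA r ∧ PA r ≤ c ^ 2 • PB r := by
  refine forall₂_congr fun r _ => and_congr ?_ ?_
  · rw [← Complex.ofReal_pow, ← Complex.ofReal_inv, Complex.coe_smul]
    exact inv_smul_le_iff (a := PB r) (b := PA r) (pow_pos hc 2)
  · rw [← Complex.ofReal_pow, Complex.coe_smul]
    rfl

lemma deltaP_le_half_log (hq : 1 ≤ q) (h : PoissonSandwich PA PB √q) :
    deltaP PA PB ≤ 1 / 2 * Real.log q := by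
  have hmem : √q ∈ {c : ℝ | 1 ≤ c ∧ PoissonSandwich PA PB c} := ⟨Real.one_le_sqrt.2 hq, h⟩
  have hpos : 0 < sInf {c : ℝ | 1 ≤ c ∧ PoissonSandwich PA PB c} :=
    one_pos.trans_le (le_csInf ⟨_, hmem⟩ fun c hc => hc.1)
  calc deltaP PA PB ≤ Real.log √q :=
        Real.log_le_log hpos (csInf_le ⟨1, fun c hc => hc.1⟩ hmem)
    _ = 1 / 2 * Real.log q := by rw [Real.log_sqrt (zero_le_one.trans hq)]; ring

lemma half_log_le_deltaP (hq : 0 < q) (hPAB : PoissonEquiv PA PB)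
    (h : ∀ c, 1 ≤ c → PoissonSandwich PA PB c → q ≤ c ^ 2) :
    1 / 2 * Real.log q ≤ deltaP PA PB :=
  calc 1 / 2 * Real.log q = Real.log √q := by rw [Real.log_sqrt hq.le]; ring
    _ ≤ deltaP PA PB := Real.log_le_log (Real.sqrt_pos.2 hq) <| le_csInf hPAB fun c hc =>
        (Real.sqrt_le_left (zero_le_one.trans hc.1)).2 (h c hc.1 hc.2)

lemma poissonSandwich_sqrt {NA NB d : ℝ} (hNA : 0 ≤ NA)
    (hA₀ : ∀ r ∈ Set.Ico (0 : ℝ) 1, 0 ≤ PA r) (hB₀ : ∀ r ∈ Set.Ico (0 : ℝ) 1, 0 ≤ PB r)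
    (hA : ∀ r ∈ Set.Ico (0 : ℝ) 1, 1 ≤ NA • PA r) (hB : ∀ r ∈ Set.Ico (0 : ℝ) 1, 1 ≤ NB • PB r)
    (hd : ∀ r ∈ Set.Ico (0 : ℝ) 1, ‖PA r - PB r‖ ≤ d) :
    PoissonSandwich PA PB √(1 + max NA NB * d) := by
  have hd₀ : 0 ≤ d := (norm_nonneg _).trans (hd 0 (Set.left_mem_Ico.2 one_pos))
  have hq : 0 < 1 + max NA NB * d := by positivity
  rw [poissonSandwich_iff (Real.sqrt_pos.2 hq), Real.sq_sqrt hq.le]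
  intro r hr
  have hsaA : IsSelfAdjoint (PA r) := .of_nonneg (hA₀ r hr)
  have hsaB : IsSelfAdjoint (PB r) := .of_nonneg (hB₀ r hr)
  have hA' : 1 ≤ max NA NB • PA r := one_le_smul_of_le (hA₀ r hr) (hA r hr) (le_max_left _ _)
  have hB' : 1 ≤ max NA NB • PB r := one_le_smul_of_le (hB₀ r hr) (hB r hr) (le_max_right _ _)
  exact ⟨le_smul_of_norm_sub_le hsaB hsaA hA' ((norm_sub_rev _ _).trans_le (hd r hr)),
    le_smul_of_norm_sub_le hsaA hsaB hB' (hd r hr)⟩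

lemma half_log_radialSup_div_le_deltaP {M : ℝ} (hPAB : PoissonEquiv PA PB)
    (hA₀ : ∀ r ∈ Set.Ico (0 : ℝ) 1, 0 ≤ PA r) (hB₀ : ∀ r ∈ Set.Ico (0 : ℝ) 1, 0 ≤ PB r)
    (hA : ∀ r ∈ Set.Ico (0 : ℝ) 1, ‖PA r‖ ≤ M) (hB : ∀ r ∈ Set.Ico (0 : ℝ) 1, ‖PB r‖ ≤ M) :
    1 / 2 * Real.log (1 + radialSup (fun r => PA r - PB r) / M) ≤ deltaP PA PB := by
  have hM : 0 ≤ M := (norm_nonneg _).trans (hA 0 (Set.left_mem_Ico.2 one_pos))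
  have hd := radialSup_nonneg fun r => PA r - PB r
  refine half_log_le_deltaP (by positivity) hPAB fun c hc h => ?_
  rw [poissonSandwich_iff (one_pos.trans_le hc)] at h
  have hc₂ : 1 ≤ c ^ 2 := one_le_pow₀ hc
  have hdM : radialSup (fun r => PA r - PB r) ≤ (c ^ 2 - 1) * M := radialSup_le fun r hr =>
    norm_sub_le_of_le_smul hc₂ (.of_nonneg (hA₀ r hr)) (.of_nonneg (hB₀ r hr)) (hA r hr) (hB r hr)
      (h r hr).2 (h r hr).1
  have := div_le_of_le_mul₀ hM (sub_nonneg.2 hc₂) hdM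
  linarith

end PoissonDistance

/-- For `A, B ∈ D^k(H)`: `𝒫(R, A)` and `𝒫(R, B)` are positive invertible,
`A` and `B` are Poisson equivalent, and
`(1/2) ln(1 + d_P(A,B) / max{sup_r ‖𝒫(R,rA)‖, sup_r ‖𝒫(R,rB)‖}) ≤ δ_P(A,B)
 ≤ (1/2) ln(1 + max{‖𝒫(R,A)⁻¹‖, ‖𝒫(R,B)⁻¹‖} · d_P(A,B))`,
where `d_P(A,B) = sup_{r ∈ [0,1)} ‖𝒫(R,rA) - 𝒫(R,rB)‖`. -/
theorem stmt_12 (hk : 1 ≤ k) (A B : Fin k → (H →L[ℂ] H))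
    (hA : memPolydisk A) (hB : memPolydisk B)
    (PA PB : ℝ → (L2 k H →L[ℂ] L2 k H))
    (hPA : ∀ r ∈ Set.Ico (0 : ℝ) 1, IsPoissonKernel A r (PA r))
    (hPB : ∀ r ∈ Set.Ico (0 : ℝ) 1, IsPoissonKernel B r (PB r))
    (PA1 PB1 : L2 k H →L[ℂ] L2 k H)
    (hPA1 : IsPoissonKernel A 1 PA1) (hPB1 : IsPoissonKernel B 1 PB1) :
    (PA1.IsPositive ∧ IsUnit PA1) ∧ (PB1.IsPositive ∧ IsUnit PB1) ∧
    PoissonEquiv PA PB ∧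
    (1 / 2) * Real.log (1 +
        (sSup {y : ℝ | ∃ r ∈ Set.Ico (0 : ℝ) 1, y = ‖PA r - PB r‖}) /
          max (sSup {y : ℝ | ∃ r ∈ Set.Ico (0 : ℝ) 1, y = ‖PA r‖})
              (sSup {y : ℝ | ∃ r ∈ Set.Ico (0 : ℝ) 1, y = ‖PB r‖})) ≤ deltaP PA PB ∧
    deltaP PA PB ≤ (1 / 2) * Real.log (1 +
        max ‖Ring.inverse PA1‖ ‖Ring.inverse PB1‖ *
          sSup {y : ℝ | ∃ r ∈ Set.Ico (0 : ℝ) 1, y = ‖PA r - PB r‖}) := by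
  have hA₁ := hPA1.isStrictlyPositive hA
  have hB₁ := hPB1.isStrictlyPositive hB
  have hA₀ r (hr : r ∈ Set.Ico (0 : ℝ) 1) := hPA1.nonneg_of_one hr.1 hr.2.le (hPA r hr) hA₁.nonneg
  have hB₀ r (hr : r ∈ Set.Ico (0 : ℝ) 1) := hPB1.nonneg_of_one hr.1 hr.2.le (hPB r hr) hB₁.nonneg
  have hAle r (hr : r ∈ Set.Ico (0 : ℝ) 1) := hPA1.norm_le_of_one hr.1 hr.2.le (hPA r hr) hA₁.nonneg
  have hBle r (hr : r ∈ Set.Ico (0 : ℝ) 1) := hPB1.norm_le_of_one hr.1 hr.2.le (hPB r hr) hB₁.nonneg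
  have hd r (hr : r ∈ Set.Ico (0 : ℝ) 1) : ‖PA r - PB r‖ ≤ radialSup fun r => PA r - PB r :=
    norm_le_radialSup (fun t ht => norm_sub_le_of_le (hAle t ht) (hBle t ht)) hr
  have hq : 1 ≤ 1 + max ‖Ring.inverse PA1‖ ‖Ring.inverse PB1‖ * radialSup fun r => PA r - PB r :=
    le_add_of_nonneg_right (by have := radialSup_nonneg fun r => PA r - PB r; positivity)
  have hsandwich := poissonSandwich_sqrt (norm_nonneg _) hA₀ hB₀
    (fun r hr => hPA1.one_le_norm_inverse_smul hr.1 hr.2.le (hPA r hr) hA₁)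
    (fun r hr => hPB1.one_le_norm_inverse_smul hr.1 hr.2.le (hPB r hr) hB₁) hd
  have hequiv : PoissonEquiv PA PB := ⟨_, Real.one_le_sqrt.2 hq, hsandwich⟩
  exact ⟨⟨(nonneg_iff_isPositive _).1 hA₁.nonneg, hA₁.isUnit⟩,
    ⟨(nonneg_iff_isPositive _).1 hB₁.nonneg, hB₁.isUnit⟩, hequiv,
    half_log_radialSup_div_le_deltaP hequiv hA₀ hB₀
      (fun r hr => (norm_le_radialSup hAle hr).trans (le_max_left _ _))
      (fun r hr => (norm_le_radialSup hBle hr).trans (le_max_right _ _)),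
    deltaP_le_half_log hq hsandwich⟩

end
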